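/- Let M be a finitely generated free abelian group of rank n and s : M →* ℂˣ a group homomorphism. Then the adic completion of ℂ[M] with respect to the maximal ideal ker(ev_s) is isomorphic, as a ℂ-algebra, to the formal power series ring ℂ[[x₁,…,xₙ]] (MvPowerSeries (Fin n) ℂ). -/

import Mathlib

set_option synthInstance.maxHeartbeats 1000000
set_option maxHeartbeats 2000000

/-!
`R[M]` is the coordinate ring of a split torus, and at the point `s` it has the local coordinates
`x_i = s(b i)⁻¹ e^(b i) - 1`, which vanish there. They define a homomorphism `R[x] → R[M]`. In the
other direction `e^(b i) ↦ s(b i) (1 + x_i)` is only defined after completing `R[x]` at `(x)`, where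
`1 + x_i` becomes invertible. Both maps respect the ideals `(x)` and `ker ev`, so they extend to the
completions, and the extensions are mutually inverse because they are so on generators.
-/

section Completion

open AdicCompletion

section Eval

variable {A : Type*} [CommRing A] {I : Ideal A}

theorem factorPow_evalₐ {m n : ℕ} (hmn : m ≤ n) (x : AdicCompletion I A) :
    Ideal.Quotient.factorPow I hmn (evalₐ I n x) = evalₐ I m x := by
  induction x using AdicCompletion.induction_on with
  | _ x =>
    rw [evalₐ_mk, evalₐ_mk]
    exact AdicCompletion.Ideal.mk_eq_mk I hmn x

theorem exists_evalₐ_of_eq (n : ℕ) (x : AdicCompletion I A) :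
    ∃ a : A, evalₐ I n (of I A a) = evalₐ I n x := by
  obtain ⟨a, ha⟩ := Ideal.Quotient.mk_surjective (evalₐ I n x)
  exact ⟨a, (evalₐ_of I n a).trans ha⟩

theorem ker_evalOneₐ_pow_le_ker_evalₐ (n : ℕ) :
    RingHom.ker (evalOneₐ I) ^ n ≤ RingHom.ker (evalₐ I n) := by
  rcases n.eq_zero_or_pos with rfl | hn
  · have : Subsingleton (A ⧸ I ^ 0) := Ideal.Quotient.subsingleton_iff.2
      ((pow_zero I).trans Ideal.one_eq_top)
    exact fun x _ => Subsingleton.elim (evalₐ I 0 x) 0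
  have map_ker_le : (RingHom.ker (evalOneₐ I)).map (evalₐ I n) ≤
      I.map (Ideal.Quotient.mk (I ^ n)) := by
    refine Ideal.map_le_iff_le_comap.2 fun x hx => ?_
    obtain ⟨a, ha⟩ := exists_evalₐ_of_eq n x
    have ha_mem : a ∈ I := by
      rw [← Ideal.Quotient.eq_zero_iff_mem, ← evalOneₐ_of I a, ← factorₐ_evalₐ_one,
        ← factorPow_evalₐ hn, ha, factorPow_evalₐ hn, factorₐ_evalₐ_one]
      exact hx
    rw [Ideal.mem_comap, ← ha, evalₐ_of]
    exact Ideal.mem_map_of_mem _ ha_mem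
  intro x hx
  have hx_map : evalₐ I n x ∈ (I ^ n).map (Ideal.Quotient.mk (I ^ n)) := by
    rw [Ideal.map_pow]
    exact Ideal.pow_right_mono map_ker_le n (Ideal.map_pow (evalₐ I n) _ n ▸
      Ideal.mem_map_of_mem (evalₐ I n) hx)
  rwa [Ideal.map_quotient_self] at hx_map

end Eval

variable {R A B : Type*} [CommRing R] [CommRing A] [CommRing B] [Algebra R A] [Algebra R B]
  {I : Ideal A} {J : Ideal B}

theorem evalₐ_apply_eq_zero_of_mem_pow {f : A →ₐ[R] AdicCompletion J B}
    (hf : ∀ a ∈ I, evalOneₐ J (f a) = 0) {n : ℕ} {a : A} (ha : a ∈ I ^ n) :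
    evalₐ J n (f a) = 0 := by
  refine ker_evalOneₐ_pow_le_ker_evalₐ n ?_
  refine Ideal.pow_right_mono (Ideal.map_le_iff_le_comap.2 hf) n ?_
  rw [← Ideal.map_pow]
  exact Ideal.mem_map_of_mem f ha

/-- The map `A ⧸ I ^ n → B ⧸ J ^ n` induced by an algebra homomorphism `f : A → B̂` which is
continuous in the sense that it carries `I` into the kernel of `B̂ → B ⧸ J`. -/
noncomputable def quotientPowLift (f : A →ₐ[R] AdicCompletion J B)
    (hf : ∀ a ∈ I, evalOneₐ J (f a) = 0) (n : ℕ) : A ⧸ I ^ n →ₐ[R] B ⧸ J ^ n :=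
  Ideal.Quotient.liftₐ (I ^ n) (((evalₐ J n).restrictScalars R).comp f)
    fun _ ha => evalₐ_apply_eq_zero_of_mem_pow hf ha

theorem quotientPowLift_mk {f : A →ₐ[R] AdicCompletion J B}
    (hf : ∀ a ∈ I, evalOneₐ J (f a) = 0) (n : ℕ) (a : A) :
    quotientPowLift f hf n (Ideal.Quotient.mk (I ^ n) a) = evalₐ J n (f a) :=
  rfl

theorem factorₐ_comp_quotientPowLift_comp_evalₐ {f : A →ₐ[R] AdicCompletion J B}
    (hf : ∀ a ∈ I, evalOneₐ J (f a) = 0) {m n : ℕ} (hmn : m ≤ n) :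
    (Ideal.Quotient.factorₐ R (Ideal.pow_le_pow_right hmn)).comp
        ((quotientPowLift f hf n).comp ((evalₐ I n).restrictScalars R)) =
      (quotientPowLift f hf m).comp ((evalₐ I m).restrictScalars R) := by
  refine AlgHom.ext fun x => ?_
  obtain ⟨a, ha⟩ := exists_evalₐ_of_eq n x
  have ha' : evalₐ I m (of I A a) = evalₐ I m x := by
    rw [← factorPow_evalₐ hmn, ha, factorPow_evalₐ hmn]
  simp only [AlgHom.comp_apply, AlgHom.restrictScalars_apply, ← ha, ← ha', evalₐ_of,
    quotientPowLift_mk]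
  exact factorPow_evalₐ hmn (f a)

/-- The continuous extension of `f : A → B̂` to the `I`-adic completion of `A`, given in degree `n`
by `quotientPowLift f hf n`. -/
noncomputable def completionLift (f : A →ₐ[R] AdicCompletion J B)
    (hf : ∀ a ∈ I, evalOneₐ J (f a) = 0) : AdicCompletion I A →ₐ[R] AdicCompletion J B :=
  liftAlgHom J (fun n => (quotientPowLift f hf n).comp ((evalₐ I n).restrictScalars R))
    (factorₐ_comp_quotientPowLift_comp_evalₐ hf)

theorem evalₐ_completionLift {f : A →ₐ[R] AdicCompletion J B}
    (hf : ∀ a ∈ I, evalOneₐ J (f a) = 0) (n : ℕ) (x : AdicCompletion I A) :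
    evalₐ J n (completionLift f hf x) = quotientPowLift f hf n (evalₐ I n x) :=
  evalₐ_liftAlgHom J _ (factorₐ_comp_quotientPowLift_comp_evalₐ hf) n x

theorem completionLift_of {f : A →ₐ[R] AdicCompletion J B}
    (hf : ∀ a ∈ I, evalOneₐ J (f a) = 0) (a : A) :
    completionLift f hf (of I A a) = f a :=
  ext_evalₐ fun n => by rw [evalₐ_completionLift, evalₐ_of, quotientPowLift_mk]

theorem completionLift_comp_completionLift_eq_id {f : A →ₐ[R] AdicCompletion J B}
    {g : B →ₐ[R] AdicCompletion I A} (hf : ∀ a ∈ I, evalOneₐ J (f a) = 0)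
    (hg : ∀ b ∈ J, evalOneₐ I (g b) = 0)
    (hgf : (completionLift g hg).comp f = IsScalarTower.toAlgHom R A (AdicCompletion I A)) :
    (completionLift g hg).comp (completionLift f hf) = AlgHom.id R (AdicCompletion I A) := by
  refine AlgHom.ext fun x => ext_evalₐ fun n => ?_
  obtain ⟨a, ha⟩ := exists_evalₐ_of_eq n x
  calc evalₐ I n (completionLift g hg (completionLift f hf x))
      = evalₐ I n (completionLift g hg (completionLift f hf (of I A a))) := by
        simp only [evalₐ_completionLift, ha]
    _ = evalₐ I n (completionLift g hg (f a)) := by rw [completionLift_of]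
    _ = evalₐ I n (of I A a) := congrArg (evalₐ I n) (DFunLike.congr_fun hgf a)
    _ = evalₐ I n x := ha

/-- Completions are isomorphic as soon as there are continuous homomorphisms `A → B̂` and `B → Â`
whose extensions are mutually inverse on the images of `A` and `B`. -/
noncomputable def completionEquiv (f : A →ₐ[R] AdicCompletion J B)
    (g : B →ₐ[R] AdicCompletion I A) (hf : ∀ a ∈ I, evalOneₐ J (f a) = 0)
    (hg : ∀ b ∈ J, evalOneₐ I (g b) = 0)
    (hgf : (completionLift g hg).comp f = IsScalarTower.toAlgHom R A (AdicCompletion I A))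
    (hfg : (completionLift f hf).comp g = IsScalarTower.toAlgHom R B (AdicCompletion J B)) :
    AdicCompletion I A ≃ₐ[R] AdicCompletion J B :=
  AlgEquiv.ofAlgHom (completionLift f hf) (completionLift g hg)
    (completionLift_comp_completionLift_eq_id hg hf hfg)
    (completionLift_comp_completionLift_eq_id hf hg hgf)

end Completion

section GroupAlgebra

open MonoidAlgebra

section UniversalProperty

variable {R S M ι : Type*} [CommRing R] [CommRing S] [Algebra R S] [CommGroup M]
  (b : Module.Basis ι ℤ (Additive M))

/-- The universal property of the Laurent algebra `R[M]`: a homomorphism out of it is a choice of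
units, the images of the `e^(b i)`. -/
noncomputable def unitsEquivAlgHom : (ι → Sˣ) ≃ (MonoidAlgebra R M →ₐ[R] S) :=
  ((Equiv.arrowCongr (.refl ι) Additive.ofMul).trans (b.constr ℤ).toEquiv).trans <|
    (addMonoidHomLequivInt ℤ).symm.toEquiv.trans <| AddMonoidHom.toMultiplicative.trans <|
      (MonoidHom.toHomUnitsMulEquiv).symm.toEquiv.trans (MonoidAlgebra.lift R S M)

theorem unitsEquivAlgHom_of_basis (u : ι → Sˣ) (i : ι) :
    unitsEquivAlgHom (R := R) b u (of R M (b i).toMul) = u i := by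
  refine (lift_of _ _).trans ?_
  exact congrArg (fun v : Additive Sˣ => (v.toMul : S)) (b.constr_basis ℤ _ i)

theorem algHom_ext_of_basis {f g : MonoidAlgebra R M →ₐ[R] S}
    (h : ∀ i, f (of R M (b i).toMul) = g (of R M (b i).toMul)) : f = g := by
  obtain ⟨u, rfl⟩ := (unitsEquivAlgHom b).surjective f
  obtain ⟨v, rfl⟩ := (unitsEquivAlgHom b).surjective g
  simp only [unitsEquivAlgHom_of_basis, Units.val_inj] at h
  rw [funext h]

end UniversalProperty

open MvPolynomial

variable {R M ι : Type*} [CommRing R] [CommGroup M]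

theorem isUnit_adicCompletionOf_of_isUnit_constantCoeff [Finite ι] {p : MvPolynomial ι R}
    (hp : IsUnit (constantCoeff p)) :
    IsUnit (AdicCompletion.of (idealOfVars ι R) _ p) := by
  rw [← MvPowerSeries.toAdicCompletion_coe]
  refine IsUnit.map _ (MvPowerSeries.isUnit_iff_constantCoeff.2 ?_)
  rwa [← MvPowerSeries.coeff_zero_eq_constantCoeff_apply, coeff_coe]

variable (b : Module.Basis ι ℤ (Additive M)) (s : M →* Rˣ)

/-- The local coordinates `x_i = s(b i)⁻¹ e^(b i) - 1` of the torus `Spec R[M]` at its point `s`. -/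
noncomputable def localCoordinates : MvPolynomial ι R →ₐ[R] MonoidAlgebra R M :=
  aeval fun i => (↑(s (b i).toMul)⁻¹ : R) • of R M (b i).toMul - 1

theorem localCoordinates_smul_one_add_X (i : ι) :
    localCoordinates b s ((s (b i).toMul : R) • (1 + X i)) = of R M (b i).toMul := by
  rw [localCoordinates, map_smul, map_add, map_one, aeval_X, add_sub_cancel, smul_smul,
    Units.mul_inv, one_smul]

/-- The expansion of the functions on the torus `Spec R[M]` at its point `s` as power series in
the local coordinates. -/
noncomputable def taylorExpansion [Finite ι] : MonoidAlgebra R M →ₐ[R]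
    AdicCompletion (idealOfVars ι R) (MvPolynomial ι R) :=
  unitsEquivAlgHom b fun i => (isUnit_adicCompletionOf_of_isUnit_constantCoeff
    (p := (s (b i).toMul : R) • (1 + X i)) (by simp)).unit

theorem taylorExpansion_of_basis [Finite ι] (i : ι) :
    taylorExpansion b s (of R M (b i).toMul) =
      AdicCompletion.of _ _ ((s (b i).toMul : R) • (1 + X i)) :=
  (unitsEquivAlgHom_of_basis b _ i).trans (IsUnit.unit_spec _)

theorem taylorExpansion_comp_localCoordinates [Finite ι] :
    (taylorExpansion b s).comp (localCoordinates b s) =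
      IsScalarTower.toAlgHom R (MvPolynomial ι R)
        (AdicCompletion (idealOfVars ι R) (MvPolynomial ι R)) := by
  refine MvPolynomial.algHom_ext fun i => ?_
  rw [AlgHom.comp_apply, localCoordinates, aeval_X, map_sub, map_smul, taylorExpansion_of_basis,
    LinearMap.map_smul_of_tower, smul_smul, Units.inv_mul, one_smul, map_one, map_add]
  exact add_sub_cancel_left _ _

variable {s} {ev : MonoidAlgebra R M →ₐ[R] R} (hev : ∀ m, ev (of R M m) = s m)

include hev

theorem localCoordinates_mem_ker {p : MvPolynomial ι R} (hp : p ∈ idealOfVars ι R) :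
    localCoordinates b s p ∈ RingHom.ker ev := by
  suffices idealOfVars ι R ≤ (RingHom.ker ev).comap (localCoordinates b s) from this hp
  refine Ideal.span_le.2 ?_
  rintro _ ⟨i, rfl⟩
  rw [SetLike.mem_coe, Ideal.mem_comap, RingHom.mem_ker, localCoordinates, aeval_X, map_sub,
    map_smul, hev, smul_eq_mul, Units.inv_mul, map_one, sub_self]

theorem evalOneₐ_taylorExpansion [Finite ι] (a : MonoidAlgebra R M) :
    AdicCompletion.evalOneₐ _ (taylorExpansion b s a) = algebraMap R _ (ev a) := by
  suffices ((AdicCompletion.evalOneₐ (idealOfVars ι R)).restrictScalars R).comp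
      (taylorExpansion b s) = (Algebra.ofId R _).comp ev from DFunLike.congr_fun this a
  refine algHom_ext_of_basis b fun i => ?_
  have hX : Ideal.Quotient.mk (idealOfVars ι R) (X i) = 0 :=
    Ideal.Quotient.eq_zero_iff_mem.2 (Ideal.subset_span ⟨i, rfl⟩)
  rw [AlgHom.comp_apply, AlgHom.comp_apply, taylorExpansion_of_basis, hev,
    AlgHom.restrictScalars_apply, AdicCompletion.evalOneₐ_of, Algebra.smul_def, map_mul, map_add,
    hX, map_one, add_zero, mul_one]
  rfl

end GroupAlgebra

theorem toAlgebra_algebraMap_comp_algebraMap {R A B : Type*} [CommSemiring R] [CommSemiring A]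
    [CommSemiring B] [Algebra R A] [Algebra A B] [algRB : Algebra R B] [IsScalarTower R A B] :
    ((algebraMap A B).comp (algebraMap R A)).toAlgebra = algRB :=
  Algebra.algebra_ext _ _ fun r => (IsScalarTower.algebraMap_apply R A B r).symm

theorem completion_of_group_algebra_iso_power_series_general
    {R M ι : Type*} [CommRing R] [CommGroup M] [Finite ι] (b : Module.Basis ι ℤ (Additive M))
    (s : M →* Rˣ) (ev : MonoidAlgebra R M →ₐ[R] R)
    (hev : ∀ m : M, ev (MonoidAlgebra.of R M m) = s m) :
    Nonempty (AdicCompletion (RingHom.ker ev) (MonoidAlgebra R M) ≃ₐ[R] MvPowerSeries ι R) := by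
  have hf : ∀ a ∈ RingHom.ker ev, AdicCompletion.evalOneₐ _ (taylorExpansion b s a) = 0 :=
    fun a ha => by rw [evalOneₐ_taylorExpansion b hev, (RingHom.mem_ker).1 ha, map_zero]
  let g : MvPolynomial ι R →ₐ[R] AdicCompletion (RingHom.ker ev) (MonoidAlgebra R M) :=
    (IsScalarTower.toAlgHom R (MonoidAlgebra R M) _).comp (localCoordinates b s)
  have hg : ∀ p ∈ MvPolynomial.idealOfVars ι R, AdicCompletion.evalOneₐ _ (g p) = 0 :=
    fun p hp => Ideal.Quotient.eq_zero_iff_mem.2 (localCoordinates_mem_ker b hev hp)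
  have e := completionEquiv (taylorExpansion b s) g hf hg
    (algHom_ext_of_basis b fun i => by
      rw [AlgHom.comp_apply, taylorExpansion_of_basis, completionLift_of]
      exact congrArg (algebraMap _ (AdicCompletion (RingHom.ker ev) _))
        (localCoordinates_smul_one_add_X b s i))
    (by
      rw [← taylorExpansion_comp_localCoordinates b s]
      exact AlgHom.ext fun p => completionLift_of hf (localCoordinates b s p))
  exact ⟨e.trans ((MvPowerSeries.toAdicCompletionAlgEquiv ι R).symm.restrictScalars R)⟩

/-- The completion of the group algebra `ℂ[M]` of a finitely generated free abelian group
`M` of rank `n` at the maximal ideal `ker (ev_s)` of a point `s : M →* ℂˣ` is isomorphic,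
as a ℂ-algebra, to the formal power series ring `ℂ[[x₁,…,xₙ]]`. -/
theorem completion_of_group_algebra_iso_power_series
    -- M: a finitely generated free abelian group of rank n (written multiplicatively)
    (M : Type*) [CommGroup M] [Module.Free ℤ (Additive M)] [Module.Finite ℤ (Additive M)]
    (n : ℕ) (hrank : Module.finrank ℤ (Additive M) = n)
    -- the point s, a homomorphism M →* ℂˣ
    (s : M →* ℂˣ)
    -- ev_s : ℂ[M] → ℂ, the evaluation at s (e^λ ↦ s(λ))
    (evs : MonoidAlgebra ℂ M →ₐ[ℂ] ℂ)
    (hevs : ∀ m : M, evs (MonoidAlgebra.of ℂ M m) = s m) :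
    -- the (ker ev_s)-adic completion of ℂ[M] is ℂ-algebra isomorphic to ℂ[[x₁,…,xₙ]]
    letI : Algebra ℂ (AdicCompletion (RingHom.ker evs.toRingHom) (MonoidAlgebra ℂ M)) :=
      ((algebraMap (MonoidAlgebra ℂ M)
          (AdicCompletion (RingHom.ker evs.toRingHom) (MonoidAlgebra ℂ M))).comp
        (algebraMap ℂ (MonoidAlgebra ℂ M))).toAlgebra
    Nonempty
      (AdicCompletion (RingHom.ker evs.toRingHom) (MonoidAlgebra ℂ M)
        ≃ₐ[ℂ] MvPowerSeries (Fin n) ℂ) := by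
  rw [toAlgebra_algebraMap_comp_algebraMap]
  exact completion_of_group_algebra_iso_power_series_general
    (Module.finBasisOfFinrankEq ℤ (Additive M) hrank) s evs hevs
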